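/- Let p be an odd prime, G a finite powerful p-group, and i ≥ 1. Then the quotient group H = Ω_i(G^p) / (Ω_i(G^p))^{p²} is powerfully nilpotent of powerful nilpotency class at most 2; in particular, writing N = (Ω_i(G^p))^{p²} and M = Ω_i(G^{p²})·N / N, the chain {1} ≤ M ≤ H is a powerfully central chain of H. -/

import Mathlib

/-- The subgroup generated by the `n`-th powers of the elements of `H`. -/
def subgroupPow {G : Type*} [Group G] (H : Subgroup G) (n : ℕ) : Subgroup G :=
  Subgroup.closure {x | ∃ h ∈ H, h ^ n = x}

/-- `Ω_i(H)`: the subgroup generated by the elements of `H` whose order divides `p ^ i`. -/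
def omegaSubgroup {G : Type*} [Group G] (p i : ℕ) (H : Subgroup G) : Subgroup G :=
  Subgroup.closure {x | x ∈ H ∧ x ^ p ^ i = 1}

/-- A finite `p`-group `G` is powerful if `[G,G] ≤ G^p` when `p` is odd,
and `[G,G] ≤ G^4` when `p = 2`. -/
def IsPowerful (p : ℕ) (G : Type*) [Group G] : Prop :=
  if p = 2 then commutator G ≤ subgroupPow (⊤ : Subgroup G) 4
  else commutator G ≤ subgroupPow (⊤ : Subgroup G) p

/-- The subgroup of `n`-th powers of the whole group is normal (indeed characteristic). -/
instance subgroupPow_top_normal {G : Type*} [Group G] (n : ℕ) :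
    (subgroupPow (⊤ : Subgroup G) n).Normal := by
  constructor
  intro x hx g
  have key : Subgroup.map (MulAut.conj g).toMonoidHom (subgroupPow (⊤ : Subgroup G) n)
      ≤ subgroupPow (⊤ : Subgroup G) n := by
    rw [subgroupPow, MonoidHom.map_closure]
    apply Subgroup.closure_le _ |>.mpr
    rintro y ⟨z, ⟨h, -, rfl⟩, rfl⟩
    exact Subgroup.subset_closure ⟨(MulAut.conj g) h, trivial, by
      simp [((MulAut.conj g).toMonoidHom.map_pow h n).symm]⟩
  have hmem : (MulAut.conj g) x ∈
      Subgroup.map (MulAut.conj g).toMonoidHom (subgroupPow (⊤ : Subgroup G) n) :=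
    Subgroup.mem_map_of_mem _ hx
  simpa [MulAut.conj_apply] using key hmem

/-- A powerfully central chain `{1} = H 0 ≤ H 1 ≤ ⋯ ≤ H n = G` of length `n`:
`[H (k+1), G] ≤ (H k)^p` for all `k < n`. -/
def IsPowerfullyCentralChain (p : ℕ) {G : Type*} [Group G] (n : ℕ) (H : ℕ → Subgroup G) : Prop :=
  H 0 = ⊥ ∧ H n = ⊤ ∧ (∀ k, k < n → H k ≤ H (k + 1)) ∧
    ∀ k, k < n → ⁅H (k + 1), (⊤ : Subgroup G)⁆ ≤ subgroupPow (H k) p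

/-- A group is powerfully nilpotent if it is powerful and admits a powerfully central chain. -/
def IsPowerfullyNilpotent (p : ℕ) (G : Type*) [Group G] : Prop :=
  IsPowerful p G ∧ ∃ (n : ℕ) (H : ℕ → Subgroup G), IsPowerfullyCentralChain p n H

/-- The powerful nilpotency class: the least possible length of a powerfully central chain. -/
noncomputable def powerfulNilpotencyClass (p : ℕ) (G : Type*) [Group G] : ℕ :=
  sInf {n | ∃ H : ℕ → Subgroup G, IsPowerfullyCentralChain p n H}

/-!
Write `P n = G ^ (p ^ n)`. The key fact is that `Ω_1(G)` has exponent `p` and that `Ω_1(P n)`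
centralises `Ω_n(G)`; both statements are proved simultaneously by induction on `|G|`, passing to
proper powerful subgroups and to proper quotients. Factoring out `Ω_1(G)` repeatedly then bounds
orders of commutators: `⁅x, y⁆ ^ p ^ m = 1` whenever `x ∈ P a` has order dividing
`p ^ (b + 1 + m)` and `y ∈ P b` has order dividing `p ^ (a + m)`. Since `⁅x, y⁆ ∈ P (a + b + 1)`
and the elements of `P (c + k)` are `p ^ k`-th powers of elements of `P c`, it follows that
`⁅Ω_i(P a), Ω_i(P b)⁆ ≤ Ω_i(P c) ^ (p ^ k)` if `c + k = a + b + 1`, `k ≤ a` and `k ≤ b + 1`.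
The cases `(a, b, c, k) = (2, 1, 2, 2)` and `(1, 1, 2, 1)` give the two inclusions required of the
chain `{1} ≤ M ≤ H`.
-/

universe u

open scoped commutatorElement

section Identities

variable {G : Type u} [Group G]

theorem commutatorElement_pow_left (x y : G) (n : ℕ) :
    ⁅x ^ n, y⁆ = x ^ n * (x⁻¹ * ⁅x, y⁆) ^ n := by
  have conj_inv : x⁻¹ * ⁅x, y⁆ = y * x⁻¹ * y⁻¹ := by rw [commutatorElement_def]; group
  rw [conj_inv, conj_pow, commutatorElement_def, inv_pow]
  simp only [mul_assoc]

theorem commutatorElement_pow_left_of_commute {x y : G} (h : Commute x ⁅x, y⁆) (n : ℕ) :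
    ⁅x ^ n, y⁆ = ⁅x, y⁆ ^ n := by
  rw [commutatorElement_pow_left, h.inv_left.mul_pow, inv_pow, mul_inv_cancel_left]

theorem commutatorElement_pow_right_of_commute {x y : G} (h : Commute y ⁅x, y⁆) (n : ℕ) :
    ⁅x, y ^ n⁆ = ⁅x, y⁆ ^ n := by
  have h' : Commute y ⁅y, x⁆ := by rw [← commutatorElement_inv x y]; exact h.inv_right
  rw [← commutatorElement_inv (y ^ n) x, commutatorElement_pow_left_of_commute h' n, ← inv_pow,
    commutatorElement_inv]

theorem mul_pow_of_commute_commutatorElement {x y : G} (hx : Commute x ⁅y, x⁆)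
    (hy : Commute y ⁅y, x⁆) (n : ℕ) :
    (x * y) ^ n = x ^ n * y ^ n * ⁅y, x⁆ ^ n.choose 2 := by
  induction n with
  | zero => simp
  | succ n ih =>
    have swap : y ^ n * x = ⁅y, x⁆ ^ n * x * y ^ n := by
      rw [← commutatorElement_pow_left_of_commute hy, commutatorElement_def]; group
    calc (x * y) ^ (n + 1)
        = x ^ n * y ^ n * (⁅y, x⁆ ^ n.choose 2 * (x * y)) := by rw [pow_succ, ih, mul_assoc]
      _ = x ^ n * (y ^ n * x) * y * ⁅y, x⁆ ^ n.choose 2 := by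
          rw [← ((hx.mul_left hy).pow_right _).eq]; simp only [mul_assoc]
      _ = x ^ n * (⁅y, x⁆ ^ n * (x * y ^ (n + 1))) * ⁅y, x⁆ ^ n.choose 2 := by
          rw [swap, pow_succ y]; simp only [mul_assoc]
      _ = x ^ (n + 1) * y ^ (n + 1) * ⁅y, x⁆ ^ (n + 1).choose 2 := by
          rw [← ((hx.mul_left (hy.pow_left (n + 1))).pow_right n).eq, Nat.choose_succ_succ' n 1,
            Nat.choose_one_right, pow_succ x, pow_add ⁅y, x⁆]
          simp only [mul_assoc]

variable {p : ℕ}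

theorem mul_pow_prime_of_commute_commutatorElement (hp : p.Prime) (hp2 : p ≠ 2) {x y : G}
    (hx : Commute x ⁅y, x⁆) (hy : Commute y ⁅y, x⁆) (hc : ⁅y, x⁆ ^ p = 1) :
    (x * y) ^ p = x ^ p * y ^ p := by
  obtain ⟨k, hk⟩ : p ∣ p.choose 2 := hp.dvd_choose_self two_ne_zero (hp.two_le.lt_of_ne' hp2)
  rw [mul_pow_of_commute_commutatorElement hx hy, hk, pow_mul, hc, one_pow, mul_one]

theorem commutatorElement_pow_prime_eq_one (hp : p.Prime) (hp2 : p ≠ 2) {x y : G}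
    (hx : Commute x ⁅x, ⁅x, y⁆⁆) (hxy : Commute ⁅x, y⁆ ⁅x, ⁅x, y⁆⁆) (hc : ⁅x, y⁆ ^ p = 1) :
    ⁅x ^ p, y⁆ = 1 := by
  have inv_comm : ⁅⁅x, y⁆, x⁻¹⁆ = ⁅x, ⁅x, y⁆⁆ := by
    rw [commutatorElement_inv_right, mul_assoc, ← hx.eq, inv_mul_cancel_left]
  have comm_pow : ⁅x, ⁅x, y⁆⁆ ^ p = 1 := by
    rw [← commutatorElement_pow_right_of_commute hxy, hc, commutatorElement_one_right]
  rw [commutatorElement_pow_left, mul_pow_prime_of_commute_commutatorElement hp hp2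
    (inv_comm ▸ hx.inv_left) (inv_comm ▸ hxy) (inv_comm ▸ comm_pow), hc, mul_one, inv_pow,
    mul_inv_cancel]

end Identities

section PowersAndTorsion

variable {G G' : Type*} [Group G] [Group G'] {p : ℕ}

theorem closure_normal_of_conj_mem {S : Set G} (h : ∀ x ∈ S, ∀ g : G, g * x * g⁻¹ ∈ S) :
    (Subgroup.closure S).Normal := by
  have conj_eq : Group.conjugatesOfSet S = S := by
    refine Set.Subset.antisymm (fun x hx => ?_) Group.subset_conjugatesOfSet
    obtain ⟨y, hy, hyx⟩ := Group.mem_conjugatesOfSet_iff.1 hx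
    obtain ⟨g, rfl⟩ := isConj_iff.1 hyx
    exact h y hy g
  exact conj_eq ▸ Subgroup.normalClosure_normal (s := S)

instance subgroupPow_normal (H : Subgroup G) [hH : H.Normal] (n : ℕ) :
    (subgroupPow H n).Normal := by
  refine closure_normal_of_conj_mem ?_
  rintro _ ⟨x, hx, rfl⟩ g
  exact ⟨g * x * g⁻¹, hH.conj_mem x hx g, conj_pow⟩

instance omegaSubgroup_normal (p i : ℕ) (H : Subgroup G) [hH : H.Normal] :
    (omegaSubgroup p i H).Normal := by
  refine closure_normal_of_conj_mem ?_
  rintro x ⟨hx, hx1⟩ g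
  exact ⟨hH.conj_mem x hx g, by rw [conj_pow, hx1, mul_one, mul_inv_cancel]⟩

theorem pow_mem_subgroupPow {H : Subgroup G} {x : G} (hx : x ∈ H) (n : ℕ) :
    x ^ n ∈ subgroupPow H n :=
  Subgroup.subset_closure ⟨x, hx, rfl⟩

theorem subgroupPow_le_iff {H K : Subgroup G} {n : ℕ} :
    subgroupPow H n ≤ K ↔ ∀ x ∈ H, x ^ n ∈ K := by
  refine ⟨fun h x hx => h (pow_mem_subgroupPow hx n), fun h => (Subgroup.closure_le K).2 ?_⟩
  rintro _ ⟨x, hx, rfl⟩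
  exact h x hx

theorem subgroupPow_mono {H K : Subgroup G} (h : H ≤ K) (n : ℕ) :
    subgroupPow H n ≤ subgroupPow K n :=
  subgroupPow_le_iff.2 fun _ hx => pow_mem_subgroupPow (h hx) n

theorem subgroupPow_le_self (H : Subgroup G) (n : ℕ) : subgroupPow H n ≤ H :=
  subgroupPow_le_iff.2 fun _ hx => pow_mem hx n

theorem map_subgroupPow (f : G →* G') (H : Subgroup G) (n : ℕ) :
    (subgroupPow H n).map f = subgroupPow (H.map f) n := by
  refine le_antisymm (Subgroup.map_le_iff_le_comap.2 (subgroupPow_le_iff.2 fun x hx => ?_))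
    (subgroupPow_le_iff.2 ?_)
  · rw [Subgroup.mem_comap, map_pow]
    exact pow_mem_subgroupPow (Subgroup.mem_map_of_mem f hx) n
  · rintro _ ⟨x, hx, rfl⟩
    rw [← map_pow]
    exact Subgroup.mem_map_of_mem f (pow_mem_subgroupPow hx n)

theorem mem_omegaSubgroup {i : ℕ} {H : Subgroup G} {x : G} (hx : x ∈ H) (hx1 : x ^ p ^ i = 1) :
    x ∈ omegaSubgroup p i H :=
  Subgroup.subset_closure ⟨hx, hx1⟩

theorem pow_pow_eq_one_of_le {i j : ℕ} (hij : i ≤ j) {x : G} (hx : x ^ p ^ i = 1) :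
    x ^ p ^ j = 1 :=
  orderOf_dvd_iff_pow_eq_one.1 ((orderOf_dvd_of_pow_eq_one hx).trans (pow_dvd_pow p hij))

theorem omegaSubgroup_mono {i j : ℕ} {H K : Subgroup G} (hij : i ≤ j) (h : H ≤ K) :
    omegaSubgroup p i H ≤ omegaSubgroup p j K :=
  Subgroup.closure_mono fun _ hx => ⟨h hx.1, pow_pow_eq_one_of_le hij hx.2⟩

theorem map_subtype_omegaSubgroup_top (i : ℕ) (H : Subgroup G) :
    (omegaSubgroup p i (⊤ : Subgroup H)).map H.subtype = omegaSubgroup p i H := by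
  rw [omegaSubgroup, MonoidHom.map_closure, omegaSubgroup]
  congr 1
  ext x
  constructor
  · rintro ⟨y, ⟨-, hy⟩, rfl⟩
    exact ⟨y.2, by simpa using congrArg H.subtype hy⟩
  · rintro ⟨hx, hx1⟩
    exact ⟨⟨x, hx⟩, ⟨Subgroup.mem_top _, Subtype.ext hx1⟩, rfl⟩

theorem mk_commutatorElement (N : Subgroup G) [N.Normal] (x y : G) :
    ((⁅x, y⁆ : G) : G ⧸ N) = ⁅(x : G ⧸ N), (y : G ⧸ N)⁆ :=
  rfl

theorem commute_mk_iff {N : Subgroup G} [N.Normal] {x y : G} :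
    Commute (x : G ⧸ N) (y : G ⧸ N) ↔ ⁅x, y⁆ ∈ N := by
  rw [← commutatorElement_eq_one_iff_commute, ← mk_commutatorElement, QuotientGroup.eq_one_iff]

theorem mk_pow_eq_one_iff {N : Subgroup G} [N.Normal] {x : G} {n : ℕ} :
    (x : G ⧸ N) ^ n = 1 ↔ x ^ n ∈ N := by
  rw [← QuotientGroup.mk_pow, QuotientGroup.eq_one_iff]

theorem commutator_closure_le {S T : Set G} {N : Subgroup G} [N.Normal]
    (h : ∀ s ∈ S, ∀ t ∈ T, ⁅s, t⁆ ∈ N) : ⁅Subgroup.closure S, Subgroup.closure T⁆ ≤ N := by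
  have comm_left : ∀ t ∈ T, ∀ s ∈ Subgroup.closure S, Commute (s : G ⧸ N) t := by
    intro t ht s hs
    induction hs using Subgroup.closure_induction with
    | mem s hs => exact commute_mk_iff.2 (h s hs t ht)
    | one => exact Commute.one_left _
    | mul _ _ _ _ ha hb => exact Commute.mul_left ha hb
    | inv _ _ ha => exact Commute.inv_left ha
  refine Subgroup.commutator_le.2 fun s hs t ht => commute_mk_iff.1 ?_
  induction ht using Subgroup.closure_induction with
  | mem t ht => exact comm_left t ht s hs
  | one => exact Commute.one_right _
  | mul _ _ _ _ ha hb => exact Commute.mul_right ha hb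
  | inv _ _ ha => exact Commute.inv_right ha

theorem commutator_subgroupPow_le {H K N : Subgroup G} [N.Normal] {n : ℕ}
    (h : ∀ x ∈ H, ∀ y ∈ K, ⁅x ^ n, y⁆ ∈ N) : ⁅subgroupPow H n, K⁆ ≤ N := by
  rw [← K.closure_eq]
  refine commutator_closure_le ?_
  rintro _ ⟨x, hx, rfl⟩ y hy
  exact h x hx y hy

end PowersAndTorsion

section Nilpotent

variable {G : Type u} [Group G]

theorem eq_bot_of_le_commutator [Group.IsNilpotent G] {A : Subgroup G} (h : A ≤ ⁅A, ⊤⁆) :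
    A = ⊥ := by
  obtain ⟨n, hn⟩ := Subgroup.nilpotent_iff_lowerCentralSeries.1 ‹Group.IsNilpotent G›
  have le_lower : ∀ k, A ≤ (⊤ : Subgroup G).lowerCentralSeries k := by
    intro k
    induction k with
    | zero => exact le_top
    | succ k ih => exact h.trans (Subgroup.commutator_mono ih le_rfl)
  exact le_bot_iff.1 (hn ▸ le_lower n)

theorem map_mk'_top (N : Subgroup G) [N.Normal] :
    (⊤ : Subgroup G).map (QuotientGroup.mk' N) = ⊤ :=
  Subgroup.map_top_of_surjective _ (QuotientGroup.mk'_surjective N)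

theorem le_of_le_commutator_sup [Group.IsNilpotent G] {A B : Subgroup G} [B.Normal]
    (h : A ≤ ⁅A, ⊤⁆ ⊔ B) : A ≤ B := by
  rw [← QuotientGroup.ker_mk' B, ← Subgroup.map_eq_bot_iff]
  refine eq_bot_of_le_commutator ((Subgroup.map_mono h).trans_eq ?_)
  rw [Subgroup.map_sup, Subgroup.map_commutator, QuotientGroup.map_mk'_self, sup_bot_eq,
    map_mk'_top]

end Nilpotent

section FinitePGroup

variable {G : Type u} [Group G] [Finite G]

theorem card_subgroup_lt {K : Subgroup G} (h : K ≠ ⊤) : Nat.card K < Nat.card G :=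
  lt_of_le_of_ne (Nat.card_le_card_of_injective _ K.subtype_injective)
    fun e => h (Subgroup.eq_top_of_card_eq K e)

theorem card_quotient_lt {N : Subgroup G} (h : N ≠ ⊥) : Nat.card (G ⧸ N) < Nat.card G := by
  rw [Subgroup.card_eq_card_quotient_mul_card_subgroup N]
  exact lt_mul_of_one_lt_right Nat.card_pos ((Subgroup.one_lt_card_iff_ne_bot N).2 h)

variable {p : ℕ}

theorem exists_normal_index_eq_prime (hp : p.Prime) (hG : IsPGroup p G) [Nontrivial G] :
    ∃ K : Subgroup G, K.Normal ∧ K.index = p := by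
  have : Fact p.Prime := ⟨hp⟩
  obtain ⟨n, hn_pos, hn⟩ := hG.nontrivial_iff_card.1 ‹Nontrivial G›
  obtain ⟨m, rfl⟩ := Nat.exists_eq_succ_of_ne_zero hn_pos.ne'
  obtain ⟨K, hK⟩ := Sylow.exists_subgroup_card_pow_prime (G := G) p (n := m)
    (hn ▸ pow_dvd_pow p (Nat.le_succ m))
  have index_eq : K.index = p := by
    have card_mul := K.card_mul_index
    rw [hK, hn, pow_succ] at card_mul
    exact Nat.eq_of_mul_eq_mul_left (pow_pos hp.pos m) card_mul
  refine ⟨K, Subgroup.normal_of_index_eq_minFac_card ?_, index_eq⟩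
  rw [index_eq, hn, hp.pow_minFac hn_pos.ne']

theorem subgroupPow_top_ne_top (hp : p.Prime) (hG : IsPGroup p G) [Nontrivial G] :
    subgroupPow (⊤ : Subgroup G) p ≠ ⊤ := by
  obtain ⟨K, _, hK⟩ := exists_normal_index_eq_prime hp hG
  have pow_le : subgroupPow (⊤ : Subgroup G) p ≤ K :=
    subgroupPow_le_iff.2 fun x _ => hK ▸ K.pow_index_mem x
  intro h
  rw [h, top_le_iff] at pow_le
  rw [pow_le, Subgroup.index_top] at hK
  exact hp.one_lt.ne hK

theorem eq_bot_of_le_subgroupPow (hp : p.Prime) (hG : IsPGroup p G) {H : Subgroup G}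
    (h : H ≤ subgroupPow H p) : H = ⊥ := by
  by_contra hne
  have : Nontrivial H := (Subgroup.nontrivial_iff_ne_bot H).2 hne
  refine subgroupPow_top_ne_top hp (hG.to_subgroup H) ?_
  rw [← top_le_iff, ← Subgroup.map_le_map_iff_of_injective H.subtype_injective, map_subgroupPow,
    ← MonoidHom.range_eq_map, Subgroup.range_subtype]
  exact h

end FinitePGroup

theorem isPowerful_iff_of_ne_two {p : ℕ} (hp2 : p ≠ 2) {G : Type*} [Group G] :
    IsPowerful p G ↔ ⁅(⊤ : Subgroup G), (⊤ : Subgroup G)⁆ ≤ subgroupPow (⊤ : Subgroup G) p := by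
  rw [IsPowerful, if_neg hp2, commutator_def]

/-- The hypotheses common to the whole argument: `p` is an odd prime and `G` is a finite powerful
`p`-group. -/
structure IsOddPowerfulPGroup (p : ℕ) (G : Type u) [Group G] : Prop where
  prime : p.Prime
  ne_two : p ≠ 2
  finite : Finite G
  isPGroup : IsPGroup p G
  isPowerful : IsPowerful p G

/-- The iterated power series `P 0 = G`, `P (k + 1) = (P k) ^ p`. In a powerful group `P k` is the
agemo subgroup `℧_k(G) = G ^ (p ^ k)`, see `IsOddPowerfulPGroup.subgroupPow_eq_agemo`. -/
def agemo (p : ℕ) (G : Type u) [Group G] : ℕ → Subgroup G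
  | 0 => ⊤
  | k + 1 => subgroupPow (agemo p G k) p

section Agemo

variable {G : Type u} [Group G] {p : ℕ}

instance agemo_normal (p : ℕ) (k : ℕ) : (agemo p G k).Normal := by
  induction k with
  | zero => exact inferInstanceAs (⊤ : Subgroup G).Normal
  | succ k ih => exact subgroupPow_normal _ _

theorem pow_mem_agemo_succ {k : ℕ} {x : G} (hx : x ∈ agemo p G k) : x ^ p ∈ agemo p G (k + 1) :=
  pow_mem_subgroupPow hx p

theorem agemo_antitone : Antitone (agemo p G) :=
  antitone_nat_of_succ_le fun _ => subgroupPow_le_self _ _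

theorem pow_mem_agemo (x : G) (k : ℕ) : x ^ p ^ k ∈ agemo p G k := by
  induction k with
  | zero => exact Subgroup.mem_top _
  | succ k ih => rw [pow_succ, pow_mul]; exact pow_mem_agemo_succ ih

theorem map_agemo_le {G' : Type*} [Group G'] (f : G →* G') (k : ℕ) :
    (agemo p G k).map f ≤ agemo p G' k := by
  induction k with
  | zero => exact le_top
  | succ k ih => exact (map_subgroupPow f _ p).trans_le (subgroupPow_mono ih p)

theorem mk_mem_agemo (N : Subgroup G) [N.Normal] {k : ℕ} {x : G} (hx : x ∈ agemo p G k) :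
    (x : G ⧸ N) ∈ agemo p (G ⧸ N) k :=
  map_agemo_le (QuotientGroup.mk' N) k (Subgroup.mem_map_of_mem _ hx)

end Agemo

namespace IsOddPowerfulPGroup

variable {G : Type u} [Group G] {p : ℕ}

theorem quotient (h : IsOddPowerfulPGroup p G) (N : Subgroup G) [N.Normal] :
    IsOddPowerfulPGroup p (G ⧸ N) where
  prime := h.prime
  ne_two := h.ne_two
  finite := by have := h.finite; infer_instance
  isPGroup := h.isPGroup.to_quotient N
  isPowerful := by
    have map_le := Subgroup.map_mono (f := QuotientGroup.mk' N)
      ((isPowerful_iff_of_ne_two h.ne_two).1 h.isPowerful)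
    rw [map_subgroupPow, Subgroup.map_commutator, map_mk'_top] at map_le
    exact (isPowerful_iff_of_ne_two h.ne_two).2 map_le

theorem subgroup (h : IsOddPowerfulPGroup p G) {K : Subgroup G} (hK : ⁅K, K⁆ ≤ subgroupPow K p) :
    IsOddPowerfulPGroup p K where
  prime := h.prime
  ne_two := h.ne_two
  finite := by have := h.finite; infer_instance
  isPGroup := h.isPGroup.to_subgroup K
  isPowerful := by
    rw [isPowerful_iff_of_ne_two h.ne_two,
      ← Subgroup.map_le_map_iff_of_injective K.subtype_injective, map_subgroupPow,
      Subgroup.map_commutator, ← MonoidHom.range_eq_map, Subgroup.range_subtype]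
    exact hK

theorem isNilpotent (h : IsOddPowerfulPGroup p G) : Group.IsNilpotent G := by
  have := h.finite
  have : Fact p.Prime := ⟨h.prime⟩
  exact h.isPGroup.isNilpotent

/-- The classical fact that `N ^ p` is powerfully embedded whenever `N` is: modulo
`[N ^ p, G, G] (N ^ p) ^ p` the commutator `⁅x, ⁅x, g⁆⁆` is central, so `⁅x ^ p, g⁆` vanishes. -/
theorem commutator_subgroupPow_top_le (h : IsOddPowerfulPGroup p G) {N : Subgroup G} [N.Normal]
    (hN : ⁅N, (⊤ : Subgroup G)⁆ ≤ subgroupPow N p) :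
    ⁅subgroupPow N p, (⊤ : Subgroup G)⁆ ≤ subgroupPow (subgroupPow N p) p := by
  have := h.isNilpotent
  refine le_of_le_commutator_sup (commutator_subgroupPow_le fun x hx g hg => ?_)
  set E := ⁅⁅subgroupPow N p, (⊤ : Subgroup G)⁆, (⊤ : Subgroup G)⁆ ⊔ subgroupPow (subgroupPow N p) p
  have comm_mem : ⁅x, g⁆ ∈ subgroupPow N p := hN (Subgroup.commutator_mem_commutator hx hg)
  have central (t : G) : Commute (t : G ⧸ E) (⁅x, ⁅x, g⁆⁆ : G) := by
    refine commute_mk_iff.2 (Subgroup.mem_sup_left ?_)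
    rw [Subgroup.commutator_comm, Subgroup.commutator_comm (subgroupPow N p)]
    exact Subgroup.commutator_mem_commutator (Subgroup.mem_top t)
      (Subgroup.commutator_mem_commutator (Subgroup.mem_top x) comm_mem)
  have comm_pow : ((⁅x, g⁆ : G) : G ⧸ E) ^ p = 1 :=
    mk_pow_eq_one_iff.2 (Subgroup.mem_sup_right (pow_mem_subgroupPow comm_mem p))
  rw [← QuotientGroup.eq_one_iff, mk_commutatorElement, QuotientGroup.mk_pow]
  exact commutatorElement_pow_prime_eq_one h.prime h.ne_two (central x) (central ⁅x, g⁆) comm_pow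

theorem commutator_agemo_top_le (h : IsOddPowerfulPGroup p G) (k : ℕ) :
    ⁅agemo p G k, (⊤ : Subgroup G)⁆ ≤ agemo p G (k + 1) := by
  induction k with
  | zero => exact (isPowerful_iff_of_ne_two h.ne_two).1 h.isPowerful
  | succ k ih => exact h.commutator_subgroupPow_top_le ih

theorem commutatorElement_mem_agemo_left (h : IsOddPowerfulPGroup p G) {k : ℕ} {x : G}
    (hx : x ∈ agemo p G k) (y : G) : ⁅x, y⁆ ∈ agemo p G (k + 1) :=
  h.commutator_agemo_top_le k (Subgroup.commutator_mem_commutator hx (Subgroup.mem_top y))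

theorem commutatorElement_mem_agemo_right (h : IsOddPowerfulPGroup p G) {k : ℕ} (x : G) {y : G}
    (hy : y ∈ agemo p G k) : ⁅x, y⁆ ∈ agemo p G (k + 1) := by
  rw [← commutatorElement_inv y x]
  exact inv_mem (h.commutatorElement_mem_agemo_left hy x)

theorem commutator_agemo_le (h : IsOddPowerfulPGroup p G) (a b : ℕ) :
    ⁅agemo p G a, agemo p G b⁆ ≤ agemo p G (a + b + 1) := by
  induction a with
  | zero =>
    rw [Nat.zero_add, Subgroup.commutator_comm]
    exact (Subgroup.commutator_mono le_rfl le_top).trans (h.commutator_agemo_top_le b)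
  | succ a ih =>
    rw [add_right_comm a 1 b]
    refine commutator_subgroupPow_le fun x hx y hy => ?_
    set N := agemo p G (a + b + 1 + 1)
    have comm_mem := ih (Subgroup.commutator_mem_commutator hx hy)
    have commute : Commute (x : G ⧸ N) (⁅x, y⁆ : G) :=
      commute_mk_iff.2 (h.commutatorElement_mem_agemo_right x comm_mem)
    rw [← QuotientGroup.eq_one_iff, mk_commutatorElement, QuotientGroup.mk_pow,
      commutatorElement_pow_left_of_commute commute, ← mk_commutatorElement, mk_pow_eq_one_iff]
    exact pow_mem_agemo_succ comm_mem

theorem eq_bot_of_agemo_le_agemo_succ (h : IsOddPowerfulPGroup p G) {k : ℕ}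
    (hk : agemo p G k ≤ agemo p G (k + 1)) : agemo p G k = ⊥ :=
  have := h.finite
  eq_bot_of_le_subgroupPow h.prime h.isPGroup hk

theorem exists_agemo_eq_bot (h : IsOddPowerfulPGroup p G) : ∃ k, agemo p G k = ⊥ := by
  have := h.finite
  obtain ⟨n, hn⟩ := WellFoundedLT.antitone_chain_condition (α := Subgroup G)
    (agemo_antitone (p := p))
  exact ⟨n, h.eq_bot_of_agemo_le_agemo_succ (hn (n + 1) n.le_succ).le⟩

theorem mk_mul_pow_prime (h : IsOddPowerfulPGroup p G) {k : ℕ} (x : G) {y : G}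
    (hy : y ∈ agemo p G k) :
    ((x : G ⧸ agemo p G (k + 2)) * y) ^ p = (x : G ⧸ agemo p G (k + 2)) ^ p * y ^ p := by
  have comm_mem := h.commutatorElement_mem_agemo_left hy x
  have central (t : G) : Commute (t : G ⧸ agemo p G (k + 2)) (⁅y, x⁆ : G) :=
    commute_mk_iff.2 (h.commutatorElement_mem_agemo_right t comm_mem)
  exact mul_pow_prime_of_commute_commutatorElement h.prime h.ne_two (central x) (central y)
    (mk_pow_eq_one_iff.2 (pow_mem_agemo_succ comm_mem))

theorem exists_mk_pow_eq (h : IsOddPowerfulPGroup p G) {k : ℕ} {x : G}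
    (hx : x ∈ agemo p G (k + 1)) :
    ∃ u ∈ agemo p G k, (u : G ⧸ agemo p G (k + 2)) ^ p = x := by
  change x ∈ Subgroup.closure _ at hx
  induction hx using Subgroup.closure_induction with
  | mem x hx => obtain ⟨u, hu, rfl⟩ := hx; exact ⟨u, hu, rfl⟩
  | one => exact ⟨1, one_mem _, one_pow p⟩
  | mul _ _ _ _ ha hb =>
    obtain ⟨u, hu, hu_pow⟩ := ha
    obtain ⟨v, hv, hv_pow⟩ := hb
    exact ⟨u * v, mul_mem hu hv, by
      rw [QuotientGroup.mk_mul, h.mk_mul_pow_prime u hv, hu_pow, hv_pow, QuotientGroup.mk_mul]⟩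
  | inv _ _ ha =>
    obtain ⟨u, hu, hu_pow⟩ := ha
    exact ⟨u⁻¹, inv_mem hu, by rw [QuotientGroup.mk_inv, inv_pow, hu_pow, QuotientGroup.mk_inv]⟩

/-- A root modulo `P (m + j + 1)` improves to a root modulo `P (m + j + 2)`, and the series
terminates. -/
theorem exists_pow_prime_eq (h : IsOddPowerfulPGroup p G) {m : ℕ} {x : G}
    (hx : x ∈ agemo p G (m + 1)) : ∃ u ∈ agemo p G m, u ^ p = x := by
  have approx (j : ℕ) : ∃ u ∈ agemo p G m, (u ^ p)⁻¹ * x ∈ agemo p G (m + j + 1) := by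
    induction j with
    | zero => exact ⟨1, one_mem _, by rwa [one_pow, inv_one, one_mul]⟩
    | succ j ih =>
      obtain ⟨u, hu, hux⟩ := ih
      obtain ⟨v, hv, hv_pow⟩ := h.exists_mk_pow_eq hux
      refine ⟨u * v, mul_mem hu (agemo_antitone (Nat.le_add_right m j) hv), ?_⟩
      change _ ∈ agemo p G (m + j + 2)
      rw [← QuotientGroup.eq, QuotientGroup.mk_pow, QuotientGroup.mk_mul,
        h.mk_mul_pow_prime u hv, hv_pow, ← QuotientGroup.mk_pow, ← QuotientGroup.mk_mul,
        mul_inv_cancel_left]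
  obtain ⟨k, hk⟩ := h.exists_agemo_eq_bot
  obtain ⟨u, hu, hux⟩ := approx k
  have mem_bot : (u ^ p)⁻¹ * x ∈ (⊥ : Subgroup G) :=
    hk ▸ agemo_antitone (by omega : k ≤ m + k + 1) hux
  exact ⟨u, hu, inv_mul_eq_one.1 (Subgroup.mem_bot.1 mem_bot)⟩

theorem exists_pow_eq (h : IsOddPowerfulPGroup p G) {m k : ℕ} {x : G}
    (hx : x ∈ agemo p G (m + k)) : ∃ u ∈ agemo p G m, u ^ p ^ k = x := by
  induction k generalizing x with
  | zero => exact ⟨x, hx, by rw [pow_zero, pow_one]⟩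
  | succ k ih =>
    obtain ⟨v, hv, rfl⟩ := h.exists_pow_prime_eq (m := m + k) hx
    obtain ⟨u, hu, rfl⟩ := ih hv
    exact ⟨u, hu, by rw [pow_succ, pow_mul]⟩

theorem subgroupPow_eq_agemo (h : IsOddPowerfulPGroup p G) (k : ℕ) :
    subgroupPow (⊤ : Subgroup G) (p ^ k) = agemo p G k := by
  refine le_antisymm (subgroupPow_le_iff.2 fun x _ => pow_mem_agemo x k) fun x hx => ?_
  obtain ⟨u, hu, rfl⟩ := h.exists_pow_eq (m := 0) (k := k) (by rwa [Nat.zero_add])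
  exact pow_mem_subgroupPow hu _

end IsOddPowerfulPGroup

/-- The two facts on elements of order `p` that are proved together by induction on the group
order: `Ω_1(G)` has exponent `p`, and `Ω_1(P n)` centralises `Ω_n(G)` for every `n`. -/
structure HasRegularOmegaOne (p : ℕ) (G : Type u) [Group G] : Prop where
  pow_eq_one : ∀ {x : G}, x ∈ omegaSubgroup p 1 (⊤ : Subgroup G) → x ^ p = 1
  commute : ∀ {n : ℕ} {x y : G}, x ∈ agemo p G n → x ^ p = 1 → y ^ p ^ n = 1 → Commute x y

section OmegaOne

variable {G : Type u} [Group G] {p : ℕ}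

theorem mem_omegaSubgroup_one {H : Subgroup G} {x : G} (hx : x ∈ H) (hxp : x ^ p = 1) :
    x ∈ omegaSubgroup p 1 H :=
  mem_omegaSubgroup hx (by rwa [pow_one])

theorem omegaSubgroup_one_ne_bot [Finite G] (hp : p.Prime) (hG : IsPGroup p G) {H : Subgroup G}
    (hH : H ≠ ⊥) : omegaSubgroup p 1 H ≠ ⊥ := by
  have : Fact p.Prime := ⟨hp⟩
  have : Nontrivial H := (Subgroup.nontrivial_iff_ne_bot H).2 hH
  obtain ⟨m, hm_pos, hm⟩ := (hG.to_subgroup H).nontrivial_iff_card.1 this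
  obtain ⟨x, hx⟩ := exists_prime_orderOf_dvd_card' (G := H) p (hm ▸ dvd_pow_self p hm_pos.ne')
  rw [← Subgroup.orderOf_coe] at hx
  intro hbot
  have mem_bot : (x : G) ∈ omegaSubgroup p 1 H :=
    mem_omegaSubgroup_one x.2 (orderOf_dvd_iff_pow_eq_one.1 hx.dvd)
  rw [hbot, Subgroup.mem_bot] at mem_bot
  rw [mem_bot, orderOf_one] at hx
  exact hp.one_lt.ne hx

theorem HasRegularOmegaOne.pow_eq_one_of_mem {K : Subgroup G} (hK : HasRegularOmegaOne p K)
    {x : G} (hx : x ∈ omegaSubgroup p 1 K) : x ^ p = 1 := by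
  rw [← map_subtype_omegaSubgroup_top] at hx
  obtain ⟨y, hy, rfl⟩ := hx
  rw [← map_pow, hK.pow_eq_one hy, map_one]

theorem HasRegularOmegaOne.commutatorElement_mem {N : Subgroup G} [N.Normal]
    (hN : HasRegularOmegaOne p (G ⧸ N)) {n : ℕ} {x y : G} (hx : x ∈ agemo p G n)
    (hxN : x ^ p ∈ N) (hyN : y ^ p ^ n ∈ N) : ⁅x, y⁆ ∈ N :=
  commute_mk_iff.1 (hN.commute (mk_mem_agemo N hx) (mk_pow_eq_one_iff.2 hxN)
    (mk_pow_eq_one_iff.2 hyN))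

end OmegaOne

namespace IsOddPowerfulPGroup

variable {G : Type u} [Group G] {p : ℕ}

/-- `⟨y⟩ P 1` is abelian modulo `P 2`, which is generated by `p`-th powers of elements of `P 1`. -/
theorem zpowers_sup_agemo_one (h : IsOddPowerfulPGroup p G) (y : G) :
    IsOddPowerfulPGroup p (Subgroup.zpowers y ⊔ agemo p G 1 : Subgroup G) := by
  have comm_le : ⁅Subgroup.zpowers y ⊔ agemo p G 1, Subgroup.zpowers y ⊔ agemo p G 1⁆
      ≤ agemo p G 2 := by
    rw [Subgroup.zpowers_eq_closure, ← (agemo p G 1).closure_eq, ← Subgroup.closure_union]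
    refine commutator_closure_le ?_
    rintro s (rfl | hs) t (rfl | ht)
    · rw [commutatorElement_self]; exact one_mem _
    · exact h.commutatorElement_mem_agemo_right s ht
    · exact h.commutatorElement_mem_agemo_left hs t
    · exact h.commutatorElement_mem_agemo_left hs t
  exact h.subgroup (comm_le.trans (subgroupPow_mono le_sup_right p))

theorem agemo_one_eq_bot_of_zpowers_sup_eq_top (h : IsOddPowerfulPGroup p G) {y : G}
    (hy : y ^ p = 1) (htop : (Subgroup.zpowers y ⊔ agemo p G 1 : Subgroup G) = ⊤) :
    agemo p G 1 = ⊥ := by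
  refine h.eq_bot_of_agemo_le_agemo_succ (subgroupPow_le_iff.2 fun x _ => ?_)
  obtain ⟨_, ⟨n, rfl⟩, b, hb, rfl⟩ :=
    Subgroup.mem_sup_of_normal_right.1 (htop ▸ Subgroup.mem_top x)
  have commute : Commute ((y ^ n : G) : G ⧸ agemo p G 2) b :=
    commute_mk_iff.2 (h.commutatorElement_mem_agemo_right _ hb)
  have zpow_pow : (y ^ n) ^ p = 1 := by
    rw [← zpow_natCast, zpow_comm, zpow_natCast, hy, one_zpow]
  rw [← QuotientGroup.eq_one_iff, QuotientGroup.mk_pow, QuotientGroup.mk_mul, commute.mul_pow,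
    ← QuotientGroup.mk_pow, zpow_pow, QuotientGroup.mk_one, one_mul, mk_pow_eq_one_iff]
  exact pow_mem_agemo_succ hb

/-- The commutator is the product of `x * y * x⁻¹` and `y⁻¹`, both in `Ω_1(⟨y⟩ P 1)`. -/
theorem commutatorElement_pow_eq_one_of_pow_right_eq_one (h : IsOddPowerfulPGroup p G)
    (ihK : ∀ K : Subgroup G, K ≠ ⊤ → IsOddPowerfulPGroup p K → HasRegularOmegaOne p K)
    (x : G) {y : G} (hy : y ^ p = 1) : ⁅x, y⁆ ^ p = 1 := by
  have comm_mem : ⁅x, y⁆ ∈ agemo p G 1 :=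
    h.commutatorElement_mem_agemo_left (k := 0) (Subgroup.mem_top x) y
  by_cases htop : (Subgroup.zpowers y ⊔ agemo p G 1 : Subgroup G) = ⊤
  · rw [h.agemo_one_eq_bot_of_zpowers_sup_eq_top hy htop, Subgroup.mem_bot] at comm_mem
    rw [comm_mem, one_pow]
  · refine (ihK _ htop (h.zpowers_sup_agemo_one y)).pow_eq_one_of_mem ?_
    have y_mem : y ∈ Subgroup.zpowers y ⊔ agemo p G 1 :=
      Subgroup.mem_sup_left (Subgroup.mem_zpowers y)
    have conj_mem : x * y * x⁻¹ ∈ Subgroup.zpowers y ⊔ agemo p G 1 := by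
      have conj_eq : x * y * x⁻¹ = ⁅x, y⁆ * y := by rw [commutatorElement_def]; group
      exact conj_eq ▸ mul_mem (Subgroup.mem_sup_right comm_mem) y_mem
    exact mul_mem
      (mem_omegaSubgroup_one conj_mem (by rw [conj_pow, hy, mul_one, mul_inv_cancel]))
      (inv_mem (mem_omegaSubgroup_one y_mem hy))

theorem agemo_one (h : IsOddPowerfulPGroup p G) : IsOddPowerfulPGroup p (agemo p G 1) :=
  h.subgroup ((Subgroup.commutator_mono le_rfl le_top).trans (h.commutator_agemo_top_le 1))

/-- Factoring out `Ω_1(P 1)` lowers the orders of `x` and `y` by a factor `p`. -/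
theorem commutatorElement_pow_eq_one_of_mem_agemo_succ (h : IsOddPowerfulPGroup p G)
    (ihK : ∀ K : Subgroup G, K ≠ ⊤ → IsOddPowerfulPGroup p K → HasRegularOmegaOne p K)
    (ihQ : ∀ N : Subgroup G, [N.Normal] → N ≠ ⊥ → HasRegularOmegaOne p (G ⧸ N))
    {n : ℕ} {x y : G} (hx : x ∈ agemo p G (n + 1)) (hxp : x ^ p ^ 2 = 1)
    (hyp : y ^ p ^ (n + 2) = 1) : ⁅x, y⁆ ^ p = 1 := by
  have := h.finite
  have x_mem : x ∈ agemo p G 1 := agemo_antitone (Nat.le_add_left 1 n) hx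
  by_cases hbot : agemo p G 1 = ⊥
  · rw [hbot, Subgroup.mem_bot] at x_mem
    rw [x_mem, commutatorElement_one_left, one_pow]
  · have ne_top : agemo p G 1 ≠ ⊤ := fun htop => hbot (le_bot_iff.1
      ((agemo_antitone zero_le_one).trans (h.eq_bot_of_agemo_le_agemo_succ (k := 0) htop.ge).le))
    refine (ihK _ ne_top h.agemo_one).pow_eq_one_of_mem
      ((ihQ _ (omegaSubgroup_one_ne_bot h.prime h.isPGroup hbot)).commutatorElement_mem hx
        (mem_omegaSubgroup_one (pow_mem x_mem p) ?_)
        (mem_omegaSubgroup_one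
          (agemo_antitone (Nat.le_add_left 1 n) (pow_mem_agemo y (n + 1))) ?_))
    · rw [← pow_mul, ← pow_two, hxp]
    · rw [← pow_mul, ← pow_succ, hyp]

theorem commute_of_central_commutator_omegaSubgroup (h : IsOddPowerfulPGroup p G)
    (ihK : ∀ K : Subgroup G, K ≠ ⊤ → IsOddPowerfulPGroup p K → HasRegularOmegaOne p K)
    (ihQ : ∀ N : Subgroup G, [N.Normal] → N ≠ ⊥ → HasRegularOmegaOne p (G ⧸ N)) {n : ℕ}
    (hcentral : ⁅⁅omegaSubgroup p 1 (agemo p G (n + 2)), omegaSubgroup p (n + 2) (⊤ : Subgroup G)⁆,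
      (⊤ : Subgroup G)⁆ = ⊥)
    {x y : G} (hx : x ∈ agemo p G (n + 2)) (hxp : x ^ p = 1) (hyp : y ^ p ^ (n + 2) = 1) :
    Commute x y := by
  obtain ⟨w, hw, rfl⟩ := h.exists_pow_prime_eq hx
  have hwp : w ^ p ^ 2 = 1 := by rw [pow_two, pow_mul, hxp]
  have comm_pow : ⁅w, y⁆ ^ p = 1 :=
    h.commutatorElement_pow_eq_one_of_mem_agemo_succ ihK ihQ hw hwp hyp
  have comm_mem : ⁅w, y⁆ ∈ omegaSubgroup p 1 (agemo p G (n + 2)) :=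
    mem_omegaSubgroup_one (h.commutatorElement_mem_agemo_left hw y) comm_pow
  have w_mem : w ∈ omegaSubgroup p (n + 2) (⊤ : Subgroup G) :=
    omegaSubgroup_mono (Nat.le_add_left 2 n) le_rfl (mem_omegaSubgroup (Subgroup.mem_top w) hwp)
  have central (t : G) : Commute t ⁅w, ⁅w, y⁆⁆ := by
    rw [← commutatorElement_eq_one_iff_commute, ← Subgroup.mem_bot, ← hcentral,
      Subgroup.commutator_comm, Subgroup.commutator_comm (omegaSubgroup p 1 _)]
    exact Subgroup.commutator_mem_commutator (Subgroup.mem_top t)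
      (Subgroup.commutator_mem_commutator w_mem comm_mem)
  exact commutatorElement_eq_one_iff_commute.1
    (commutatorElement_pow_prime_eq_one h.prime h.ne_two (central w) (central _) comm_pow)

/-- If `D = [Ω_1(P (n + 2)), Ω_{n + 2}(G)]` is not central, then the inductive hypothesis on
`G / [D, G]` gives `D ≤ [D, G]`, so `D` is trivial by nilpotency. -/
theorem commute_of_mem_agemo_add_two (h : IsOddPowerfulPGroup p G)
    (ihK : ∀ K : Subgroup G, K ≠ ⊤ → IsOddPowerfulPGroup p K → HasRegularOmegaOne p K)
    (ihQ : ∀ N : Subgroup G, [N.Normal] → N ≠ ⊥ → HasRegularOmegaOne p (G ⧸ N)) {n : ℕ}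
    {x y : G} (hx : x ∈ agemo p G (n + 2)) (hxp : x ^ p = 1) (hyp : y ^ p ^ (n + 2) = 1) :
    Commute x y := by
  have := h.isNilpotent
  set D := ⁅omegaSubgroup p 1 (agemo p G (n + 2)), omegaSubgroup p (n + 2) (⊤ : Subgroup G)⁆
  by_cases hcentral : ⁅D, (⊤ : Subgroup G)⁆ = ⊥
  · exact h.commute_of_central_commutator_omegaSubgroup ihK ihQ hcentral hx hxp hyp
  · have D_le : D ≤ ⁅D, (⊤ : Subgroup G)⁆ := by
      refine commutator_closure_le ?_
      rintro s ⟨hs, hsp⟩ t ⟨-, htp⟩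
      rw [pow_one] at hsp
      exact (ihQ _ hcentral).commutatorElement_mem hs (hsp ▸ one_mem _) (htp ▸ one_mem _)
    rw [← commutatorElement_eq_one_iff_commute, ← Subgroup.mem_bot, ← eq_bot_of_le_commutator D_le]
    exact Subgroup.commutator_mem_commutator (mem_omegaSubgroup_one hx hxp)
      (mem_omegaSubgroup (Subgroup.mem_top y) hyp)

theorem commute_of_mem_agemo_one (h : IsOddPowerfulPGroup p G)
    (ihK : ∀ K : Subgroup G, K ≠ ⊤ → IsOddPowerfulPGroup p K → HasRegularOmegaOne p K)
    (ihQ : ∀ N : Subgroup G, [N.Normal] → N ≠ ⊥ → HasRegularOmegaOne p (G ⧸ N))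
    {x y : G} (hx : x ∈ agemo p G 1) (hxp : x ^ p = 1) (hyp : y ^ p = 1) : Commute x y := by
  obtain ⟨w, hw, rfl⟩ := h.exists_pow_prime_eq hx
  have comm_pow : ⁅w, y⁆ ^ p = 1 := h.commutatorElement_pow_eq_one_of_pow_right_eq_one ihK w hyp
  have comm_comm_pow : ⁅w, ⁅w, y⁆⁆ ^ p = 1 :=
    h.commutatorElement_pow_eq_one_of_pow_right_eq_one ihK w comm_pow
  have comm_comm_mem : ⁅w, ⁅w, y⁆⁆ ∈ agemo p G 2 :=
    h.commutatorElement_mem_agemo_right w (h.commutatorElement_mem_agemo_left hw y)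
  have commute {t : G} (ht : (t ^ p) ^ p = 1) : Commute t ⁅w, ⁅w, y⁆⁆ :=
    (h.commute_of_mem_agemo_add_two ihK ihQ (n := 0) comm_comm_mem comm_comm_pow
      (by rw [pow_two, pow_mul, ht])).symm
  exact commutatorElement_eq_one_iff_commute.1
    (commutatorElement_pow_prime_eq_one h.prime h.ne_two (commute hxp)
      (commute (by rw [comm_pow, one_pow])) comm_pow)

theorem hasRegularOmegaOne_of_subgroup_of_quotient (h : IsOddPowerfulPGroup p G)
    (ihK : ∀ K : Subgroup G, K ≠ ⊤ → IsOddPowerfulPGroup p K → HasRegularOmegaOne p K)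
    (ihQ : ∀ N : Subgroup G, [N.Normal] → N ≠ ⊥ → HasRegularOmegaOne p (G ⧸ N)) :
    HasRegularOmegaOne p G where
  pow_eq_one {x} hx := by
    induction hx using Subgroup.closure_induction with
    | mem x hx => rw [← hx.2, pow_one]
    | one => exact one_pow p
    | mul x y _ _ hxp hyp =>
      have comm_pow : ⁅y, x⁆ ^ p = 1 :=
        h.commutatorElement_pow_eq_one_of_pow_right_eq_one ihK y hxp
      have comm_mem : ⁅y, x⁆ ∈ agemo p G 1 :=
        h.commutatorElement_mem_agemo_left (k := 0) (Subgroup.mem_top y) x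
      have commute {t : G} (ht : t ^ p = 1) : Commute t ⁅y, x⁆ :=
        (h.commute_of_mem_agemo_one ihK ihQ comm_mem comm_pow ht).symm
      rw [mul_pow_prime_of_commute_commutatorElement h.prime h.ne_two (commute hxp) (commute hyp)
        comm_pow, hxp, hyp, one_mul]
    | inv x _ hxp => rw [inv_pow, hxp, inv_one]
  commute {n x y} hx hxp hyp := by
    match n with
    | 0 =>
      rw [pow_zero, pow_one] at hyp
      exact hyp ▸ Commute.one_right x
    | 1 => exact h.commute_of_mem_agemo_one ihK ihQ hx hxp (by rwa [pow_one] at hyp)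
    | n + 2 => exact h.commute_of_mem_agemo_add_two ihK ihQ hx hxp hyp

theorem hasRegularOmegaOne (h : IsOddPowerfulPGroup p G) : HasRegularOmegaOne p G := by
  induction hn : Nat.card G using Nat.strong_induction_on generalizing G with
  | _ n ih =>
    subst hn
    have := h.finite
    exact h.hasRegularOmegaOne_of_subgroup_of_quotient
      (fun K hK hKp => ih _ (card_subgroup_lt hK) hKp rfl)
      (fun N _ hN => ih _ (card_quotient_lt hN) (h.quotient N) rfl)

theorem mk_omegaSubgroup_one_pow_eq_one_iff (h : IsOddPowerfulPGroup p G) {x : G} {n : ℕ} :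
    (x : G ⧸ omegaSubgroup p 1 (⊤ : Subgroup G)) ^ p ^ n = 1 ↔ x ^ p ^ (n + 1) = 1 := by
  rw [mk_pow_eq_one_iff, pow_succ, pow_mul]
  exact ⟨h.hasRegularOmegaOne.pow_eq_one, mem_omegaSubgroup_one (Subgroup.mem_top _)⟩

theorem commute_of_mem_agemo (h : IsOddPowerfulPGroup p G) {a b : ℕ} {x y : G}
    (hx : x ∈ agemo p G a) (hy : y ∈ agemo p G b) (hxp : x ^ p ^ (b + 1) = 1)
    (hyp : y ^ p ^ a = 1) : Commute x y := by
  induction b generalizing G with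
  | zero => exact h.hasRegularOmegaOne.commute hx (by rwa [zero_add, pow_one] at hxp) hyp
  | succ b ih =>
    obtain ⟨w, hw, rfl⟩ := h.exists_pow_prime_eq hy
    rw [← pow_mul, ← pow_succ'] at hyp
    set V := omegaSubgroup p 1 (⊤ : Subgroup G)
    have comm_mem_V : ⁅x, w⁆ ∈ V :=
      commute_mk_iff.1 (ih (h.quotient V) (mk_mem_agemo V hx) (mk_mem_agemo V hw)
        (h.mk_omegaSubgroup_one_pow_eq_one_iff.2 hxp) (h.mk_omegaSubgroup_one_pow_eq_one_iff.2 hyp))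
    have comm_pow : ⁅x, w⁆ ^ p = 1 := h.hasRegularOmegaOne.pow_eq_one comm_mem_V
    have comm_mem : ⁅x, w⁆ ∈ agemo p G (a + 1) := h.commutatorElement_mem_agemo_left hx w
    rw [← commutatorElement_eq_one_iff_commute, commutatorElement_pow_right_of_commute
      (h.hasRegularOmegaOne.commute comm_mem comm_pow hyp).symm, comm_pow]

/-- Factoring out `Ω_1(G)` repeatedly reduces this to the case `m = 0`, in which `x` and `y`
commute. -/
theorem commutatorElement_pow_eq_one (h : IsOddPowerfulPGroup p G) {a b m : ℕ} {x y : G}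
    (hx : x ∈ agemo p G a) (hy : y ∈ agemo p G b) (hxp : x ^ p ^ (b + 1 + m) = 1)
    (hyp : y ^ p ^ (a + m) = 1) : ⁅x, y⁆ ^ p ^ m = 1 := by
  induction m generalizing G with
  | zero =>
    rw [commutatorElement_eq_one_iff_commute.2 (h.commute_of_mem_agemo hx hy hxp hyp), one_pow]
  | succ m ih =>
    set V := omegaSubgroup p 1 (⊤ : Subgroup G)
    rw [← h.mk_omegaSubgroup_one_pow_eq_one_iff]
    exact ih (h.quotient V) (mk_mem_agemo V hx) (mk_mem_agemo V hy)
      (h.mk_omegaSubgroup_one_pow_eq_one_iff.2 hxp) (h.mk_omegaSubgroup_one_pow_eq_one_iff.2 hyp)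

/-- A commutator of generators is `u ^ p ^ k` for some `u ∈ P c`, and its order divides
`p ^ (i - k)`, so that the order of `u` divides `p ^ i`. -/
theorem commutator_omegaSubgroup_agemo_le (h : IsOddPowerfulPGroup p G) {a b c k : ℕ}
    (hka : k ≤ a) (hkb : k ≤ b + 1) (hc : a + b + 1 = c + k) (i : ℕ) :
    ⁅omegaSubgroup p i (agemo p G a), omegaSubgroup p i (agemo p G b)⁆ ≤
      subgroupPow (omegaSubgroup p i (agemo p G c)) (p ^ k) := by
  refine commutator_closure_le ?_
  rintro x ⟨hx, hxp⟩ y ⟨hy, hyp⟩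
  have comm_mem : ⁅x, y⁆ ∈ agemo p G (c + k) :=
    hc ▸ h.commutator_agemo_le a b (Subgroup.commutator_mem_commutator hx hy)
  have comm_pow : ⁅x, y⁆ ^ p ^ (i - k) = 1 :=
    h.commutatorElement_pow_eq_one hx hy (pow_pow_eq_one_of_le (by omega) hxp)
      (pow_pow_eq_one_of_le (by omega) hyp)
  obtain ⟨u, hu, hu_pow⟩ := h.exists_pow_eq comm_mem
  rcases le_or_gt k i with hki | hik
  · refine hu_pow ▸ pow_mem_subgroupPow (mem_omegaSubgroup hu ?_) _
    rw [← Nat.add_sub_of_le hki, pow_add, pow_mul, hu_pow, comm_pow]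
  · rw [Nat.sub_eq_zero_of_le hik.le, pow_zero, pow_one] at comm_pow
    exact comm_pow ▸ one_mem _

end IsOddPowerfulPGroup

section Chains

variable {G : Type*} [Group G] {p : ℕ}

theorem commutator_subgroupOf_top_le {W A B : Subgroup G} (hA : A ≤ W) (hB : B ≤ W) {n : ℕ}
    (h : ⁅A, W⁆ ≤ subgroupPow B n) :
    ⁅A.subgroupOf W, (⊤ : Subgroup W)⁆ ≤ subgroupPow (B.subgroupOf W) n := by
  rw [← Subgroup.map_le_map_iff_of_injective W.subtype_injective, map_subgroupPow,
    Subgroup.map_commutator, ← MonoidHom.range_eq_map, Subgroup.range_subtype,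
    Subgroup.map_subgroupOf_eq_of_le hA, Subgroup.map_subgroupOf_eq_of_le hB]
  exact h

theorem commutator_map_mk'_subgroupOf_le {W A B : Subgroup G} (N : Subgroup W) [N.Normal]
    (hA : A ≤ W) (hB : B ≤ W) {n : ℕ} (h : ⁅A, W⁆ ≤ subgroupPow B n) :
    ⁅(A.subgroupOf W).map (QuotientGroup.mk' N), (⊤ : Subgroup (W ⧸ N))⁆ ≤
      subgroupPow ((B.subgroupOf W).map (QuotientGroup.mk' N)) n := by
  rw [← map_mk'_top, ← Subgroup.map_commutator, ← map_subgroupPow]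
  exact Subgroup.map_mono (commutator_subgroupOf_top_le hA hB h)

theorem map_mk'_subgroupPow_top (n : ℕ) :
    subgroupPow ((⊤ : Subgroup G).map (QuotientGroup.mk' (subgroupPow (⊤ : Subgroup G) n))) n =
      ⊥ := by
  rw [← map_subgroupPow, QuotientGroup.map_mk'_self]

theorem exists_isPowerfullyCentralChain_two {M : Subgroup G}
    (hbot : ⁅M, (⊤ : Subgroup G)⁆ ≤ subgroupPow ⊥ p)
    (htop : ⁅(⊤ : Subgroup G), (⊤ : Subgroup G)⁆ ≤ subgroupPow M p) :
    ∃ H : ℕ → Subgroup G, IsPowerfullyCentralChain p 2 H := by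
  refine ⟨fun k => match k with | 0 => ⊥ | 1 => M | _ => ⊤, rfl, rfl, fun k hk => ?_,
    fun k hk => ?_⟩
  · interval_cases k
    · exact bot_le
    · exact le_top
  · interval_cases k
    · exact hbot
    · exact htop

end Chains

theorem omega_statement_6 (p : ℕ) (hp : p.Prime) (hp2 : p ≠ 2) (G : Type*) [Group G]
    [Finite G] (hG : IsPGroup p G) (hpow : IsPowerful p G) (i : ℕ) (hi : 1 ≤ i)
    (W : Subgroup G) (hW : W = omegaSubgroup p i (subgroupPow (⊤ : Subgroup G) p))
    (M : Subgroup (↥W ⧸ subgroupPow (⊤ : Subgroup ↥W) (p ^ 2)))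
    (hM : M = Subgroup.map (QuotientGroup.mk' (subgroupPow (⊤ : Subgroup ↥W) (p ^ 2)))
      ((omegaSubgroup p i (subgroupPow (⊤ : Subgroup G) (p ^ 2))).subgroupOf W)) :
    IsPowerfullyNilpotent p (↥W ⧸ subgroupPow (⊤ : Subgroup ↥W) (p ^ 2)) ∧
      powerfulNilpotencyClass p (↥W ⧸ subgroupPow (⊤ : Subgroup ↥W) (p ^ 2)) ≤ 2 ∧
      ⁅M, (⊤ : Subgroup (↥W ⧸ subgroupPow (⊤ : Subgroup ↥W) (p ^ 2)))⁆ ≤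
        subgroupPow (⊥ : Subgroup (↥W ⧸ subgroupPow (⊤ : Subgroup ↥W) (p ^ 2))) p ∧
      ⁅(⊤ : Subgroup (↥W ⧸ subgroupPow (⊤ : Subgroup ↥W) (p ^ 2))),
          (⊤ : Subgroup (↥W ⧸ subgroupPow (⊤ : Subgroup ↥W) (p ^ 2)))⁆ ≤
        subgroupPow M p := by
  have h : IsOddPowerfulPGroup p G := ⟨hp, hp2, ‹Finite G›, hG, hpow⟩
  set O := omegaSubgroup p i (subgroupPow (⊤ : Subgroup G) (p ^ 2))
  have O_eq : O = omegaSubgroup p i (agemo p G 2) := by rw [← h.subgroupPow_eq_agemo]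
  have W_eq : W = omegaSubgroup p i (agemo p G 1) := hW
  have O_le : O ≤ W := O_eq ▸ W_eq ▸ omegaSubgroup_mono le_rfl (agemo_antitone one_le_two)
  have comm_W : ⁅W, W⁆ ≤ subgroupPow O p := by
    simpa only [← O_eq, ← W_eq, pow_one] using
      h.commutator_omegaSubgroup_agemo_le (a := 1) (b := 1) (k := 1) le_rfl one_le_two rfl i
  have comm_O : ⁅O, W⁆ ≤ subgroupPow W (p ^ 2) := by
    refine le_trans ?_ (subgroupPow_mono O_le (p ^ 2))
    simpa only [← O_eq, ← W_eq] using
      h.commutator_omegaSubgroup_agemo_le (a := 2) (b := 1) (k := 2) le_rfl le_rfl rfl i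
  have comm_M := commutator_map_mk'_subgroupOf_le (subgroupPow ⊤ (p ^ 2)) O_le le_rfl comm_O
  rw [W.subgroupOf_self, map_mk'_subgroupPow_top, ← hM] at comm_M
  have comm_top := commutator_map_mk'_subgroupOf_le (subgroupPow ⊤ (p ^ 2)) le_rfl O_le comm_W
  rw [W.subgroupOf_self, map_mk'_top, ← hM] at comm_top
  obtain ⟨H, hH⟩ := exists_isPowerfullyCentralChain_two (comm_M.trans bot_le) comm_top
  exact ⟨⟨(isPowerful_iff_of_ne_two hp2).2 (comm_top.trans (subgroupPow_mono le_top p)), 2, H, hH⟩,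
    Nat.sInf_le ⟨H, hH⟩, comm_M.trans bot_le, comm_top⟩
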